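/- arXiv:0705.4253 — 2 statements merged into one kernel-verified Lean document; each statement's English description precedes it below -/
import Mathlib

section
/- Consider a pairwise separable convex program whose objective F is (λ,w)-scaled diagonally dominant, and run the min-sum algorithm with initial messages satisfying the initialization assumption. Then for every t ≥ 0, ‖x^{(t)} − x*‖_∞ ≤ K · (λ^t/(1−λ)) · Σ_{(u,v)∈E⃗} | (J^{(0)}_{u→v})'(x*_v) − ∂f_{uv}/∂x_v(x*_u, x*_v) |. In particular, x^{(t)} → x* as t → ∞. -/
open Filter Finset

/-- Partial derivative of `F : (ι → ℝ) → ℝ` in coordinate `i` at `x`. -/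
noncomputable def pd {ι : Type*} [DecidableEq ι] (F : (ι → ℝ) → ℝ) (i : ι) (x : ι → ℝ) : ℝ :=
  deriv (fun y => F (Function.update x i y)) (x i)

/-- Second partial derivative `∂²F/∂x_i∂x_j` of `F : (ι → ℝ) → ℝ` at `x`. -/
noncomputable def pd2 {ι : Type*} [DecidableEq ι] (F : (ι → ℝ) → ℝ) (i j : ι) (x : ι → ℝ) : ℝ :=
  pd (pd F j) i x

/-!
Call `∂F/∂x_i` the force on `i`. By the mean value theorem and dominance of row `i` of the Hessian,
a point `y` at which the force on `i` vanishes satisfies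
`|y_i - x*_i| ≤ λ w_i E + |∂F/∂x_i(x*)| / M` as soon as `|y_k - x*_k| ≤ w_k E` for `k ≠ i`.
A message `J⁽ᵗ⁺¹⁾_{k→i}` touches the section `f_{ki}(c_k, ·)` from below, where `c_k` minimizes the
local objective of `k` with `x_i` fixed, so it can be replaced by this section in the stationarity
condition at `i`: each level of the resulting computation tree contracts the weighted error by `λ`.
After `t` levels only initial messages remain. They preserve row dominance, being at least as curved
as the factors they stand for, and their derivatives at `x*` are the only source of error.
-/

theorem pd_eq_zero_of_isLocalMin {ι : Type*} [DecidableEq ι] {F : (ι → ℝ) → ℝ} {x : ι → ℝ}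
    (h : IsLocalMin F x) (i : ι) : pd F i x = 0 := by
  have hF : IsLocalMin F (Function.update x i (x i)) := by rwa [Function.update_eq_self]
  exact (hF.comp_continuous (g := Function.update x i) (b := x i)
    (continuous_const.update i continuous_id).continuousAt).deriv_eq_zero

theorem isLocalMin_of_forall_ne_lt {X : Type*} [TopologicalSpace X] {β : Type*}
    [Preorder β] {φ : X → β} {a : X}
    (h : ∀ y, y ≠ a → φ a < φ y) : IsLocalMin φ a := by
  refine .of_forall fun y => ?_
  rcases eq_or_ne y a with rfl | hy
  exacts [le_rfl, (h y hy).le]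

theorem le_of_le_mul_max {R : Type*} [CommRing R] [LinearOrder R]
    [IsStrictOrderedRing R] {lam r E e : R} (hlam0 : 0 ≤ lam) (hlam1 : lam < 1) (he : 0 ≤ e)
    (hE : lam * e ≤ E) (h : r ≤ lam * max E (max r e)) : r ≤ E := by
  have hE0 : 0 ≤ E := (mul_nonneg hlam0 he).trans hE
  rw [mul_max_of_nonneg _ _ hlam0, mul_max_of_nonneg _ _ hlam0, le_max_iff, le_max_iff] at h
  rcases h with h | h | h
  · exact h.trans (mul_le_of_le_one_left hE0 hlam1.le)
  · nlinarith
  · exact h.trans hE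

section PartialDerivatives

variable {ι : Type*} [DecidableEq ι] {Φ Ψ : (ι → ℝ) → ℝ} {i j : ι}

theorem pd_comp_piecewise_of_notMem {B : Finset ι} (hi : i ∉ B) (z x : ι → ℝ) :
    pd (fun x => Φ (B.piecewise z x)) i x = pd Φ i (B.piecewise z x) := by
  simp only [pd, ← B.update_piecewise_of_notMem z x hi, B.piecewise_eq_of_notMem z x hi]

theorem pd_comp_piecewise_of_mem {B : Finset ι} (hi : i ∈ B) (z x : ι → ℝ) :
    pd (fun x => Φ (B.piecewise z x)) i x = 0 := by
  have hconst : ∀ y, B.piecewise z (Function.update x i y) = B.piecewise z x := fun y =>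
    B.piecewise_congr (fun _ _ => rfl) fun k hk =>
      Function.update_of_ne (ne_of_mem_of_not_mem hi hk).symm y x
  simp only [pd, hconst, deriv_const]

theorem pd_comp_eval_self (h : ℝ → ℝ) (i : ι) (x : ι → ℝ) :
    pd (fun x => h (x i)) i x = deriv h (x i) := by
  simp only [pd, Function.update_self]

theorem pd_comp_eval_of_ne (h : ℝ → ℝ) (hij : i ≠ j) (x : ι → ℝ) :
    pd (fun x => h (x i)) j x = 0 := by
  simp only [pd, Function.update_of_ne hij, deriv_const]

theorem pd_eq_fderiv [Finite ι] {x : ι → ℝ} (hΦ : DifferentiableAt ℝ Φ x) (i : ι) :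
    pd Φ i x = fderiv ℝ Φ x (Pi.single i 1) := by
  have := Fintype.ofFinite ι
  have hΦ' : HasFDerivAt Φ (fderiv ℝ Φ x) (Function.update x i (x i)) := by
    simpa only [Function.update_eq_self] using hΦ.hasFDerivAt
  exact (hΦ'.comp_hasDerivAt (x i) (hasDerivAt_update x i (x i))).deriv

theorem pd_add [Finite ι] {x : ι → ℝ} (hΦ : DifferentiableAt ℝ Φ x)
    (hΨ : DifferentiableAt ℝ Ψ x) (i : ι) :
    pd (fun x => Φ x + Ψ x) i x = pd Φ i x + pd Ψ i x := by
  have := Fintype.ofFinite ι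
  rw [pd_eq_fderiv (hΦ.fun_add hΨ), pd_eq_fderiv hΦ, pd_eq_fderiv hΨ, fderiv_fun_add hΦ hΨ,
    add_apply]

theorem differentiable_piecewise [Finite ι] (B : Finset ι) (z : ι → ℝ) :
    Differentiable ℝ fun x : ι → ℝ => B.piecewise z x := by
  have := Fintype.ofFinite ι
  refine differentiable_pi.2 fun k => ?_
  by_cases hk : k ∈ B
  · simp only [B.piecewise_eq_of_mem _ _ hk, differentiable_const]
  · simpa only [B.piecewise_eq_of_notMem _ _ hk] using differentiable_apply k

variable [Fintype ι]

theorem contDiff_pd {m n : WithTop ℕ∞} (hΦ : ContDiff ℝ n Φ) (hmn : m + 1 ≤ n) (i : ι) :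
    ContDiff ℝ m (pd Φ i) := by
  have hdiff : Differentiable ℝ Φ :=
    hΦ.differentiable (zero_lt_one.trans_le (le_add_self.trans hmn)).ne'
  rw [funext fun x => pd_eq_fderiv (hdiff x) i]
  exact (hΦ.fderiv_right hmn).clm_apply contDiff_const

theorem pd2_comm (hΦ : ContDiff ℝ 2 Φ) (i j : ι) (x : ι → ℝ) : pd2 Φ i j x = pd2 Φ j i x := by
  have hdiff : Differentiable ℝ Φ := hΦ.differentiable two_ne_zero
  have hdiff' : Differentiable ℝ (fderiv ℝ Φ) :=
    (hΦ.fderiv_right (m := 1) le_rfl).differentiable one_ne_zero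
  have pd2_eq (i j : ι) :
      pd2 Φ i j x = fderiv ℝ (fderiv ℝ Φ) x (Pi.single i 1) (Pi.single j 1) := by
    rw [pd2, pd_eq_fderiv ((contDiff_pd hΦ le_rfl j).differentiable one_ne_zero x),
      funext fun x => pd_eq_fderiv (hdiff x) j, fderiv_clm_apply (hdiff' x) (by fun_prop)]
    simp
  rw [pd2_eq, pd2_eq, (hΦ.contDiffAt.isSymmSndFDerivAt (by simp)).eq]

theorem exists_mem_segment_sub_eq_sum_pd (hΦ : Differentiable ℝ Φ) (x y : ι → ℝ) :
    ∃ z ∈ segment ℝ x y, Φ y - Φ x = ∑ k, pd Φ k z * (y k - x k) := by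
  obtain ⟨z, hz, hmvt⟩ := domain_mvt (fun z _ => (hΦ z).hasFDerivAt.hasFDerivWithinAt) convex_univ
    (Set.mem_univ x) (Set.mem_univ y)
  refine ⟨z, hz, ?_⟩
  rw [hmvt, ← Finset.univ_sum_single (y - x), map_sum]
  refine sum_congr rfl fun k _ => ?_
  rw [pd_eq_fderiv (hΦ z), ← mul_one ((y - x) k), ← smul_eq_mul, Pi.single_smul, map_smul,
    smul_eq_mul, Pi.sub_apply, mul_comm]

end PartialDerivatives

/-- Scaled diagonal dominance of a single row: `Φ` plays the role of the partial derivative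
`∂F/∂x_i` of an objective `F`, so that `pd Φ j` is the `(i, j)` entry of its Hessian. The bound `M`
on the diagonal entry is part of the notion. -/
structure IsRowDominant {ι : Type*} [Fintype ι] [DecidableEq ι] (M lam : ℝ) (w : ι → ℝ) (i : ι)
    (Φ : (ι → ℝ) → ℝ) : Prop where
  le_pd : ∀ x, M ≤ pd Φ i x
  sum_le : ∀ x, ∑ j ∈ univ.erase i, w j * |pd Φ j x| ≤ lam * w i * pd Φ i x

namespace IsRowDominant

variable {ι : Type*} [Fintype ι] [DecidableEq ι] {M lam : ℝ} {w : ι → ℝ} {i : ι}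
  {Φ : (ι → ℝ) → ℝ}

theorem lam_nonneg (h : IsRowDominant M lam w i Φ) (hM : 0 < M) (hw : ∀ j, 0 < w j) :
    0 ≤ lam := by
  have hdiag : 0 < w i * pd Φ i 0 := mul_pos (hw i) (hM.trans_le (h.le_pd 0))
  have hrow : 0 ≤ lam * (w i * pd Φ i 0) := by
    rw [← mul_assoc]
    exact (sum_nonneg fun j _ => mul_nonneg (hw j).le (abs_nonneg _)).trans (h.sum_le 0)
  exact nonneg_of_mul_nonneg_left hrow hdiag

theorem comp_piecewise (h : IsRowDominant M lam w i Φ) (hw : ∀ j, 0 ≤ w j) {B : Finset ι}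
    (hi : i ∉ B) (z : ι → ℝ) : IsRowDominant M lam w i fun x => Φ (B.piecewise z x) where
  le_pd x := by
    rw [pd_comp_piecewise_of_notMem hi]
    exact h.le_pd _
  sum_le x := by
    rw [pd_comp_piecewise_of_notMem hi]
    refine (sum_le_sum fun j _ => ?_).trans (h.sum_le _)
    by_cases hj : j ∈ B
    · rw [pd_comp_piecewise_of_mem hj, abs_zero, mul_zero]
      exact mul_nonneg (hw j) (abs_nonneg _)
    · rw [pd_comp_piecewise_of_notMem hj]

theorem add_comp_eval (h : IsRowDominant M lam w i Φ) (hΦ : Differentiable ℝ Φ)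
    (hlam : 0 ≤ lam) (hwi : 0 ≤ w i) {u : ℝ → ℝ} (hu : Differentiable ℝ u)
    (hu' : ∀ y, 0 ≤ deriv u y) : IsRowDominant M lam w i fun x => Φ x + u (x i) := by
  have pd_eq (x : ι → ℝ) (k : ι) : pd (fun x => Φ x + u (x i)) k x =
      pd Φ k x + pd (fun x => u (x i)) k x := pd_add (hΦ x) (by fun_prop) k
  refine ⟨fun x => ?_, fun x => ?_⟩
  · rw [pd_eq, pd_comp_eval_self]
    exact le_add_of_le_of_nonneg (h.le_pd x) (hu' _)
  · calc ∑ j ∈ univ.erase i, w j * |pd (fun x => Φ x + u (x i)) j x|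
        = ∑ j ∈ univ.erase i, w j * |pd Φ j x| := sum_congr rfl fun j hj => by
          rw [pd_eq, pd_comp_eval_of_ne u (ne_of_mem_erase hj).symm, add_zero]
      _ ≤ lam * w i * pd Φ i x := h.sum_le x
      _ ≤ lam * w i * pd (fun x => Φ x + u (x i)) i x := by
          rw [pd_eq, pd_comp_eval_self]
          exact mul_le_mul_of_nonneg_left (le_add_of_nonneg_right (hu' _)) (mul_nonneg hlam hwi)

theorem abs_sub_le (h : IsRowDominant M lam w i Φ) (hM : 0 < M) (hΦ : Differentiable ℝ Φ)
    {x y : ι → ℝ} {E : ℝ} (hE : 0 ≤ E) (hxy : ∀ k, k ≠ i → |y k - x k| ≤ w k * E) :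
    |y i - x i| ≤ lam * w i * E + |Φ y - Φ x| / M := by
  obtain ⟨z, -, hz⟩ := exists_mem_segment_sub_eq_sum_pd hΦ x y
  have hdiag : M ≤ pd Φ i z := h.le_pd z
  have hpos : 0 < pd Φ i z := hM.trans_le hdiag
  have hoff : |∑ k ∈ univ.erase i, pd Φ k z * (y k - x k)| ≤ lam * w i * pd Φ i z * E :=
    calc |∑ k ∈ univ.erase i, pd Φ k z * (y k - x k)|
        ≤ ∑ k ∈ univ.erase i, |pd Φ k z * (y k - x k)| := abs_sum_le_sum_abs _ _
      _ ≤ ∑ k ∈ univ.erase i, w k * |pd Φ k z| * E := by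
          refine sum_le_sum fun k hk => ?_
          rw [abs_mul, mul_comm (w k), mul_assoc]
          exact mul_le_mul_of_nonneg_left (hxy k (ne_of_mem_erase hk)) (abs_nonneg _)
      _ ≤ lam * w i * pd Φ i z * E := by
          rw [← sum_mul]
          exact mul_le_mul_of_nonneg_right (h.sum_le z) hE
  rw [← add_sum_erase _ _ (mem_univ i)] at hz
  have hscaled : |y i - x i| * pd Φ i z ≤ lam * w i * E * pd Φ i z + |Φ y - Φ x| := by
    calc |y i - x i| * pd Φ i z
        = |(Φ y - Φ x) - ∑ k ∈ univ.erase i, pd Φ k z * (y k - x k)| := by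
          rw [hz, add_sub_cancel_right, abs_mul, abs_of_pos hpos, mul_comm]
      _ ≤ |Φ y - Φ x| + |∑ k ∈ univ.erase i, pd Φ k z * (y k - x k)| := abs_sub _ _
      _ ≤ lam * w i * E * pd Φ i z + |Φ y - Φ x| := by linarith
  calc |y i - x i| ≤ (lam * w i * E * pd Φ i z + |Φ y - Φ x|) / pd Φ i z :=
        (le_div_iff₀ hpos).2 hscaled
    _ = lam * w i * E + |Φ y - Φ x| / pd Φ i z := by
        rw [add_div, mul_div_cancel_right₀ _ hpos.ne']
    _ ≤ lam * w i * E + |Φ y - Φ x| / M := by gcongr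

end IsRowDominant

section Neighbors

variable {V : Type*} {G : SimpleGraph V}

theorem sum_neighborFinset_le_sum_sum [Fintype V] [DecidableRel G.Adj] {R : Type*}
    [AddCommMonoid R] [PartialOrder R] [IsOrderedAddMonoid R] {a : V → V → R}
    (ha : ∀ u v, 0 ≤ a u v) (i : V) :
    ∑ k ∈ G.neighborFinset i, a k i ≤ ∑ u, ∑ v ∈ G.neighborFinset u, a u v := by
  rw [sum_comm' (t' := univ) (s' := fun v => G.neighborFinset v) (by simp [G.adj_comm])]
  exact single_le_sum (f := fun v => ∑ u ∈ G.neighborFinset v, a u v)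
    (fun v _ => sum_nonneg fun u _ => ha u v) (mem_univ i)

variable [DecidableEq V] {i : V} {A : Finset V}

theorem adj_of_mem_neighborFinset_sdiff {k : V} [Fintype (G.neighborSet i)]
    (hk : k ∈ G.neighborFinset i \ A) : G.Adj k i :=
  ((G.mem_neighborFinset _ _).1 (mem_sdiff.1 hk).1).symm

theorem notMem_neighborFinset_sdiff_self [Fintype (G.neighborSet i)] : i ∉ G.neighborFinset i \ A :=
  fun hi => G.irrefl (adj_of_mem_neighborFinset_sdiff hi)

theorem sum_sum_neighborFinset_eq_incident_add [Fintype V] [DecidableRel G.Adj]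
    {R : Type*} [AddCommMonoid R] (a : V → V → R) (i : V) :
    ∑ j, ∑ k ∈ G.neighborFinset j, a j k = ∑ k ∈ G.neighborFinset i, (a i k + a k i) +
      ∑ j ∈ univ.erase i, ∑ k ∈ (G.neighborFinset j).erase i, a j k := by
  have hrow : ∀ j ∈ univ.erase i, ∑ k ∈ G.neighborFinset j, a j k =
      (if j ∈ G.neighborFinset i then a j i else 0) +
        ∑ k ∈ (G.neighborFinset j).erase i, a j k := by
    intro j _
    have hmem : i ∈ G.neighborFinset j ↔ j ∈ G.neighborFinset i := by
      simp only [G.mem_neighborFinset, G.adj_comm]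
    split_ifs with hij
    · rw [add_sum_erase _ _ (hmem.2 hij)]
    · rw [zero_add, erase_eq_of_notMem (mt hmem.1 hij)]
  have hincident : ∑ j ∈ univ.erase i, (if j ∈ G.neighborFinset i then a j i else 0) =
      ∑ k ∈ G.neighborFinset i, a k i := by
    rw [sum_ite_mem, erase_inter, univ_inter, erase_eq_of_notMem (G.notMem_neighborFinset_self i)]
  rw [← add_sum_erase _ _ (mem_univ i), sum_congr rfl hrow, sum_add_distrib, hincident,
    sum_add_distrib, add_assoc]

end Neighbors

section Objectives

variable {V : Type*} [Fintype V] [DecidableEq V] (G : SimpleGraph V) [DecidableRel G.Adj]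
  (f : V → ℝ → ℝ) (g : V → V → ℝ → ℝ → ℝ)

/-- The objective of a pairwise separable program. The double sum visits every edge in both
directions, whence the factor `1 / 2`. -/
noncomputable def objective (x : V → ℝ) : ℝ :=
  (∑ i, f i (x i)) + (1 / 2) * ∑ i, ∑ j ∈ G.neighborFinset i, g i j (x i) (x j)

/-- The objective seen by the vertex `i` when its neighbours in `A` are fixed at the values `X` and
the remaining ones are summarised by the messages `m`. For `A = ∅` this is the local objective `b_i`
of the min-sum algorithm; for `A = {j}` minimizing it computes the message from `i` to `j`. -/
def localObjective (i : V) (A : Finset V) (X : V → ℝ) (m : V → ℝ → ℝ) (y : ℝ) : ℝ :=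
  f i y + ∑ k ∈ A, g k i (X k) y + ∑ k ∈ G.neighborFinset i \ A, m k y

/-- The min-sum update rule, all minima being attained. -/
def IsMinSum (J : ℕ → V → V → ℝ → ℝ) : Prop :=
  ∀ (t : ℕ) (i j : V), G.Adj i j → ∀ xj : ℝ,
    IsLeast (Set.range fun y : ℝ =>
        f i y + g i j y xj + ∑ u ∈ (G.neighborFinset i).erase j, J t u i y)
      (J (t + 1) i j xj)

/-- The factors of a pairwise separable program: twice continuously differentiable, with `g i j` and
`g j i` denoting the same factor, its arguments swapped. -/
structure IsSmoothPairwise : Prop where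
  contDiff_node : ∀ i, ContDiff ℝ 2 (f i)
  contDiff_edge : ∀ i j, G.Adj i j → ContDiff ℝ 2 fun q : ℝ × ℝ => g i j q.1 q.2
  edge_symm : ∀ i j, G.Adj i j → ∀ a b : ℝ, g i j a b = g j i b a

/-- A pairwise separable program whose objective is `(lam, w)`-scaled diagonally dominant, with
second partial derivatives `∂²F/∂x_i²` bounded below by `M > 0`. -/
structure IsDominantProgram (M lam : ℝ) (w : V → ℝ) : Prop extends IsSmoothPairwise G f g where
  M_pos : 0 < M
  w_pos : ∀ i, 0 < w i
  le_pd2 : ∀ i x, M ≤ pd2 (objective G f g) i i x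
  sum_le : ∀ i x, ∑ j ∈ univ.erase i, w j * |pd2 (objective G f g) i j x| ≤
    lam * w i * pd2 (objective G f g) i i x

/-- The initialization assumption on the message `m` along an edge with factor `φ`: it is at least
as curved as some section `φ z`. -/
structure IsInitialMessage (φ : ℝ → ℝ → ℝ) (m : ℝ → ℝ) : Prop where
  contDiff : ContDiff ℝ 2 m
  exists_curvature_le : ∃ z, ∀ y, deriv (deriv (φ z)) y ≤ deriv (deriv m) y

variable {G f g} {i : V} {A : Finset V}

theorem localObjective_congr {X X' : V → ℝ} (h : ∀ k ∈ A, X k = X' k) (m : V → ℝ → ℝ) :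
    localObjective G f g i A X m = localObjective G f g i A X' m := by
  funext y
  have hsum : ∑ k ∈ A, g k i (X k) y = ∑ k ∈ A, g k i (X' k) y :=
    sum_congr rfl fun k hk => by rw [h k hk]
  rw [localObjective, localObjective, hsum]

theorem localObjective_empty (X : V → ℝ) (m : V → ℝ → ℝ) (y : ℝ) :
    localObjective G f g i ∅ X m y = f i y + ∑ k ∈ G.neighborFinset i, m k y := by
  rw [localObjective, sum_empty, add_zero, sdiff_empty]

theorem localObjective_neighborFinset (X : V → ℝ) (m : V → ℝ → ℝ) (y : ℝ) :
    localObjective G f g i (G.neighborFinset i) X m y =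
      f i y + ∑ k ∈ G.neighborFinset i, g k i (X k) y := by
  rw [localObjective, Finset.sdiff_self, sum_empty, add_zero]

theorem localObjective_eq_neighborFinset_piecewise_add (hA : A ⊆ G.neighborFinset i)
    (X z : V → ℝ) (m m' : V → ℝ → ℝ) (y : ℝ) :
    localObjective G f g i A X m y =
      localObjective G f g i (G.neighborFinset i) ((G.neighborFinset i \ A).piecewise z X) m' y +
        ∑ k ∈ G.neighborFinset i \ A, (m k y - g k i (z k) y) := by
  have hclamped : ∑ k ∈ G.neighborFinset i \ A,
      g k i ((G.neighborFinset i \ A).piecewise z X k) y =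
        ∑ k ∈ G.neighborFinset i \ A, g k i (z k) y :=
    sum_congr rfl fun k hk => by rw [piecewise_eq_of_mem _ _ _ hk]
  have hkept : ∑ k ∈ A, g k i ((G.neighborFinset i \ A).piecewise z X k) y =
      ∑ k ∈ A, g k i (X k) y :=
    sum_congr rfl fun k hk => by rw [piecewise_eq_of_notMem _ _ _ fun h => (mem_sdiff.1 h).2 hk]
  rw [localObjective_neighborFinset, localObjective, ← sum_sdiff hA, hclamped, hkept,
    sum_sub_distrib]
  ring

theorem exists_objective_update_eq_localObjective_add
    (hsymm : ∀ i j, G.Adj i j → ∀ a b : ℝ, g i j a b = g j i b a) (i : V) (x : V → ℝ)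
    (m : V → ℝ → ℝ) :
    ∃ C, ∀ y, objective G f g (Function.update x i y) =
      localObjective G f g i (G.neighborFinset i) x m y + C := by
  refine ⟨(∑ j ∈ univ.erase i, f j (x j)) + 1 / 2 * ∑ j ∈ univ.erase i,
    ∑ k ∈ (G.neighborFinset j).erase i, g j k (x j) (x k), fun y => ?_⟩
  have hnode : ∑ j ∈ univ.erase i, f j (Function.update x i y j) =
      ∑ j ∈ univ.erase i, f j (x j) :=
    sum_congr rfl fun j hj => by rw [Function.update_of_ne (ne_of_mem_erase hj)]
  have hincident : ∑ k ∈ G.neighborFinset i,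
      (g i k (Function.update x i y i) (Function.update x i y k) +
        g k i (Function.update x i y k) (Function.update x i y i)) =
      ∑ k ∈ G.neighborFinset i, 2 * g k i (x k) y := by
    refine sum_congr rfl fun k hk => ?_
    have hik : G.Adj i k := (G.mem_neighborFinset _ _).1 hk
    rw [Function.update_self, Function.update_of_ne hik.ne', hsymm i k hik, two_mul]
  have hrest : ∑ j ∈ univ.erase i, ∑ k ∈ (G.neighborFinset j).erase i,
      g j k (Function.update x i y j) (Function.update x i y k) =
      ∑ j ∈ univ.erase i, ∑ k ∈ (G.neighborFinset j).erase i, g j k (x j) (x k) :=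
    sum_congr rfl fun j hj => sum_congr rfl fun k hk => by
      rw [Function.update_of_ne (ne_of_mem_erase hj), Function.update_of_ne (ne_of_mem_erase hk)]
  rw [objective, ← add_sum_erase _ _ (mem_univ i), hnode, Function.update_self,
    sum_sum_neighborFinset_eq_incident_add _ i, hincident, hrest, ← mul_sum,
    localObjective_neighborFinset]
  ring

theorem isLocalMin_localObjective_piecewise (hA : A ⊆ G.neighborFinset i) {X c : V → ℝ}
    {m : V → ℝ → ℝ} {y : ℝ} (hmin : IsLocalMin (localObjective G f g i A X m) y)
    (hc : ∀ k ∈ G.neighborFinset i \ A, ∀ y', m k y' - m k y ≤ g k i (c k) y' - g k i (c k) y)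
    (m' : V → ℝ → ℝ) :
    IsLocalMin (localObjective G f g i (G.neighborFinset i)
      ((G.neighborFinset i \ A).piecewise c X) m') y := by
  filter_upwards [hmin] with y' hy'
  have hgap : ∑ k ∈ G.neighborFinset i \ A, (m k y' - g k i (c k) y') ≤
      ∑ k ∈ G.neighborFinset i \ A, (m k y - g k i (c k) y) :=
    sum_le_sum fun k hk => by linarith [hc k hk y']
  rw [localObjective_eq_neighborFinset_piecewise_add hA X c m m',
    localObjective_eq_neighborFinset_piecewise_add hA X c m m'] at hy'
  linarith

end Objectives

namespace IsMinSum

variable {V : Type*} [Fintype V] [DecidableEq V] {G : SimpleGraph V} [DecidableRel G.Adj]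
  {f : V → ℝ → ℝ} {g : V → V → ℝ → ℝ → ℝ} {J : ℕ → V → V → ℝ → ℝ}

theorem exists_isLocalMin_sub_le (hJ : IsMinSum G f g J) {k i : V} (hki : G.Adj k i)
    (hsymm : ∀ a b, g k i a b = g i k b a) (t : ℕ) (y : ℝ) :
    ∃ c, IsLocalMin (localObjective G f g k {i} (fun _ => y) fun u => J t u k) c ∧
      ∀ y', J (t + 1) k i y' - J (t + 1) k i y ≤ g k i c y' - g k i c y := by
  obtain ⟨c, hc : _ = J (t + 1) k i y⟩ := (hJ t k i hki y).1
  refine ⟨c, .of_forall fun c' => ?_, fun y' => ?_⟩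
  · have hle := (hJ t k i hki y).2 ⟨c', rfl⟩
    rw [← hc] at hle
    simpa only [localObjective, sum_singleton, sdiff_singleton_eq_erase, ← hsymm] using hle
  · have hle : J (t + 1) k i y' ≤ _ := (hJ t k i hki y').2 ⟨c, rfl⟩
    linarith

end IsMinSum

section Smoothness

variable {V : Type*} {G : SimpleGraph V} {f : V → ℝ → ℝ} {g : V → V → ℝ → ℝ → ℝ} {i : V}

namespace IsSmoothPairwise

theorem contDiff_section (h : IsSmoothPairwise G f g) {k : V} (hki : G.Adj k i) (a : ℝ) :
    ContDiff ℝ 2 (g k i a) :=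
  (h.contDiff_edge k i hki).comp (contDiff_const.prodMk contDiff_id)

variable [Fintype V] [DecidableRel G.Adj]

theorem contDiff_objective (h : IsSmoothPairwise G f g) : ContDiff ℝ 2 (objective G f g) := by
  refine .add (.sum fun i _ => (h.contDiff_node i).comp (contDiff_apply ℝ ℝ i))
    (contDiff_const.mul (.sum fun i _ => .sum fun j hj => ?_))
  exact (h.contDiff_edge i j ((G.mem_neighborFinset _ _).1 hj)).comp
    ((contDiff_apply ℝ ℝ i).prodMk (contDiff_apply ℝ ℝ j))

variable [DecidableEq V] {A : Finset V}

theorem differentiable_localObjective (h : IsSmoothPairwise G f g) (hA : A ⊆ G.neighborFinset i)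
    (X : V → ℝ) {m : V → ℝ → ℝ} (hm : ∀ k ∈ G.neighborFinset i \ A, Differentiable ℝ (m k)) :
    Differentiable ℝ (localObjective G f g i A X m) := by
  refine .add (.add ((h.contDiff_node i).differentiable two_ne_zero)
    (.fun_sum fun k hk => ?_)) (.fun_sum hm)
  exact (h.contDiff_section ((G.mem_neighborFinset _ _).1 (hA hk)).symm _).differentiable
    two_ne_zero

theorem pd_objective (h : IsSmoothPairwise G f g) (i : V) (x : V → ℝ) (m : V → ℝ → ℝ) :
    pd (objective G f g) i x =
      deriv (localObjective G f g i (G.neighborFinset i) x m) (x i) := by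
  obtain ⟨C, hC⟩ := exists_objective_update_eq_localObjective_add (f := f) h.edge_symm i x m
  rw [pd, funext hC, deriv_add_const]

theorem deriv_localObjective (h : IsSmoothPairwise G f g) (hA : A ⊆ G.neighborFinset i)
    {m : V → ℝ → ℝ} (hm : ∀ k ∈ G.neighborFinset i \ A, Differentiable ℝ (m k)) (x z : V → ℝ) :
    deriv (localObjective G f g i A x m) (x i) =
      pd (objective G f g) i ((G.neighborFinset i \ A).piecewise z x) +
        ∑ k ∈ G.neighborFinset i \ A, (deriv (m k) (x i) - deriv (g k i (z k)) (x i)) := by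
  have hdiff := h.differentiable_localObjective (m := m) (subset_refl (G.neighborFinset i))
    ((G.neighborFinset i \ A).piecewise z x) (by simp)
  have hg : ∀ k ∈ G.neighborFinset i \ A, Differentiable ℝ (g k i (z k)) := fun k hk =>
    (h.contDiff_section (adj_of_mem_neighborFinset_sdiff hk) _).differentiable two_ne_zero
  rw [funext (localObjective_eq_neighborFinset_piecewise_add hA x z m m), deriv_fun_add (hdiff _)
    (.fun_sum fun k hk => (hm k hk _).fun_sub (hg k hk _)), h.pd_objective i _ m,
    piecewise_eq_of_notMem _ _ _ notMem_neighborFinset_sdiff_self,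
    deriv_fun_sum fun k hk => (hm k hk _).fun_sub (hg k hk _)]
  exact congrArg _ (sum_congr rfl fun k hk => deriv_fun_sub (hm k hk _) (hg k hk _))

theorem differentiable_pd_objective_piecewise (h : IsSmoothPairwise G f g) (i : V)
    (B : Finset V) (z : V → ℝ) :
    Differentiable ℝ fun x => pd (objective G f g) i (B.piecewise z x) :=
  ((contDiff_pd h.contDiff_objective le_rfl i).differentiable one_ne_zero).comp
    (differentiable_piecewise B z)

theorem differentiable_sum_deriv_sub_deriv (h : IsSmoothPairwise G f g) {m : V → ℝ → ℝ}
    (hm : ∀ k ∈ G.neighborFinset i \ A, ContDiff ℝ 2 (m k)) (z : V → ℝ) :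
    Differentiable ℝ fun y => ∑ k ∈ G.neighborFinset i \ A,
      (deriv (m k) y - deriv (g k i (z k)) y) :=
  .fun_sum fun k hk => (hm k hk).differentiable_deriv_two.sub
    (h.contDiff_section (adj_of_mem_neighborFinset_sdiff hk) _).differentiable_deriv_two

theorem differentiable_deriv_localObjective (h : IsSmoothPairwise G f g)
    (hA : A ⊆ G.neighborFinset i) {m : V → ℝ → ℝ}
    (hm : ∀ k ∈ G.neighborFinset i \ A, ContDiff ℝ 2 (m k)) :
    Differentiable ℝ fun x => deriv (localObjective G f g i A x m) (x i) := by
  rw [funext fun x => h.deriv_localObjective hA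
    (fun k hk => (hm k hk).differentiable two_ne_zero) x 0]
  exact (h.differentiable_pd_objective_piecewise i _ 0).add
    ((h.differentiable_sum_deriv_sub_deriv hm 0).comp (differentiable_apply i))

end IsSmoothPairwise

end Smoothness

namespace IsDominantProgram

variable {V : Type*} [Fintype V] [DecidableEq V] {G : SimpleGraph V} [DecidableRel G.Adj]
  {f : V → ℝ → ℝ} {g : V → V → ℝ → ℝ → ℝ} {M lam : ℝ} {w : V → ℝ} {i : V} {A : Finset V}
  {xstar X : V → ℝ} {E y : ℝ}

theorem isRowDominant (h : IsDominantProgram G f g M lam w) (i : V) :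
    IsRowDominant M lam w i (pd (objective G f g) i) where
  le_pd x := h.le_pd2 i x
  sum_le x := by
    simp only [← pd2.eq_def, pd2_comm h.contDiff_objective _ i]
    exact h.sum_le i x

theorem lam_nonneg (h : IsDominantProgram G f g M lam w) (i : V) : 0 ≤ lam :=
  (h.isRowDominant i).lam_nonneg h.M_pos h.w_pos

/-- Replacing the factor `g k i (x k) ·` by a message amounts to freezing `x k` at the comparison
point of the initialization assumption and adding a function of `x i` with nonnegative second
derivative; neither operation destroys the dominance of row `i`. -/
theorem isRowDominant_deriv_localObjective (h : IsDominantProgram G f g M lam w)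
    (hA : A ⊆ G.neighborFinset i) {m : V → ℝ → ℝ}
    (hm : ∀ k ∈ G.neighborFinset i \ A, IsInitialMessage (g k i) (m k)) :
    IsRowDominant M lam w i fun x => deriv (localObjective G f g i A x m) (x i) := by
  choose! z hz using fun k hk => (hm k hk).exists_curvature_le
  have hw : ∀ j, 0 ≤ w j := fun j => (h.w_pos j).le
  have hm' : ∀ k ∈ G.neighborFinset i \ A, ContDiff ℝ 2 (m k) := fun k hk => (hm k hk).contDiff
  rw [funext fun x => h.deriv_localObjective hA
    (fun k hk => (hm' k hk).differentiable two_ne_zero) x z]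
  refine ((h.isRowDominant i).comp_piecewise hw notMem_neighborFinset_sdiff_self z).add_comp_eval
    (h.differentiable_pd_objective_piecewise i _ z) (h.lam_nonneg i) (hw i)
    (h.differentiable_sum_deriv_sub_deriv hm' z) fun y => ?_
  have hm2 : ∀ k ∈ G.neighborFinset i \ A, DifferentiableAt ℝ (deriv (m k)) y := fun k hk =>
    (hm' k hk).differentiable_deriv_two y
  have hg2 : ∀ k ∈ G.neighborFinset i \ A, DifferentiableAt ℝ (deriv (g k i (z k))) y :=
    fun k hk => (h.contDiff_section
      (adj_of_mem_neighborFinset_sdiff hk) _).differentiable_deriv_two y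
  rw [deriv_fun_sum fun k hk => (hm2 k hk).fun_sub (hg2 k hk)]
  refine sum_nonneg fun k hk => ?_
  rw [deriv_fun_sub (hm2 k hk) (hg2 k hk)]
  exact sub_nonneg.2 (hz k hk y)

theorem abs_sub_le_of_deriv_localObjective_eq_zero (h : IsDominantProgram G f g M lam w)
    (hxstar : pd (objective G f g) i xstar = 0) (hA : A ⊆ G.neighborFinset i) {m : V → ℝ → ℝ}
    (hm : ∀ k ∈ G.neighborFinset i \ A, IsInitialMessage (g k i) (m k)) (hE : 0 ≤ E)
    (hX : ∀ k ∈ A, |X k - xstar k| ≤ w k * E)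
    (hy : deriv (localObjective G f g i A X m) y = 0) :
    |y - xstar i| ≤ lam * w i * E +
      (∑ k ∈ G.neighborFinset i \ A,
        |deriv (m k) (xstar i) - deriv (g k i (xstar k)) (xstar i)|) / M := by
  set x : V → ℝ := Function.update (A.piecewise X xstar) i y with hx
  have hxi : x i = y := Function.update_self ..
  have hxA : ∀ k ∈ A, x k = X k := fun k hk => by
    rw [hx, Function.update_of_ne (G.ne_of_adj ((G.mem_neighborFinset _ _).1 (hA hk))).symm,
      piecewise_eq_of_mem _ _ _ hk]
  have hxy : ∀ k, k ≠ i → |x k - xstar k| ≤ w k * E := fun k hk => by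
    by_cases hkA : k ∈ A
    · rw [hxA k hkA]
      exact hX k hkA
    · rw [hx, Function.update_of_ne hk, piecewise_eq_of_notMem _ _ _ hkA, sub_self, abs_zero]
      exact mul_nonneg (h.w_pos k).le hE
  have hforce : deriv (localObjective G f g i A x m) (x i) = 0 := by
    rw [localObjective_congr hxA, hxi, hy]
  have hforce_star : deriv (localObjective G f g i A xstar m) (xstar i) =
      ∑ k ∈ G.neighborFinset i \ A,
        (deriv (m k) (xstar i) - deriv (g k i (xstar k)) (xstar i)) := by
    rw [h.deriv_localObjective hA (fun k hk => (hm k hk).contDiff.differentiable two_ne_zero)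
      xstar xstar, piecewise_same, hxstar, zero_add]
  have hrow := (h.isRowDominant_deriv_localObjective hA hm).abs_sub_le h.M_pos
    (h.differentiable_deriv_localObjective hA fun k hk => (hm k hk).contDiff) hE hxy
  rw [hforce, hforce_star, zero_sub, abs_neg, hxi] at hrow
  have hM : 0 < M := h.M_pos
  exact hrow.trans (by gcongr; exact abs_sum_le_sum_abs _ _)

theorem abs_sub_le_of_isLocalMin_zero (h : IsDominantProgram G f g M lam w) (hlam1 : lam < 1)
    (hxstar : pd (objective G f g) i xstar = 0) {m : V → ℝ → ℝ}
    (hm : ∀ k ∈ G.neighborFinset i, IsInitialMessage (g k i) (m k))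
    (hE : ∑ k ∈ G.neighborFinset i, |deriv (m k) (xstar i) - deriv (g k i (xstar k)) (xstar i)| ≤
      M * w i * ((1 - lam) * E))
    (hA : A ⊆ G.neighborFinset i) (hX : ∀ k ∈ A, |X k - xstar k| ≤ w k * E)
    (hy : IsLocalMin (localObjective G f g i A X m) y) : |y - xstar i| ≤ w i * E := by
  have hM : 0 < M := h.M_pos
  have hE0 : 0 ≤ E := by
    refine nonneg_of_mul_nonneg_right ?_ (mul_pos (mul_pos hM (h.w_pos i)) (sub_pos.2 hlam1))
    rw [mul_assoc]
    exact (sum_nonneg fun k _ => abs_nonneg _).trans hE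
  have hinit : (∑ k ∈ G.neighborFinset i \ A,
      |deriv (m k) (xstar i) - deriv (g k i (xstar k)) (xstar i)|) / M ≤
      w i * ((1 - lam) * E) := by
    rw [div_le_iff₀' hM, ← mul_assoc]
    exact (sum_le_sum_of_subset_of_nonneg sdiff_subset fun _ _ _ => abs_nonneg _).trans hE
  have hnode := h.abs_sub_le_of_deriv_localObjective_eq_zero hxstar hA
    (fun k hk => hm k (mem_sdiff.1 hk).1) hE0 hX hy.deriv_eq_zero
  linarith

/-- `hstep` is the claim at time `t` applied to the child `k` of `i` in the computation tree, where
`i` itself is fixed at `y`. It bounds the error of `k` partly by that of `i`, which the factor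
`lam < 1` gained at `i` absorbs. -/
theorem abs_sub_le_of_isLocalMin_succ (h : IsDominantProgram G f g M lam w) (hlam1 : lam < 1)
    (hxstar : pd (objective G f g) i xstar = 0) {J : ℕ → V → V → ℝ → ℝ} (hJ : IsMinSum G f g J)
    {t : ℕ} {e : ℝ} (he : 0 ≤ e)
    (hstep : ∀ k ∈ G.neighborFinset i, ∀ c,
      IsLocalMin (localObjective G f g k {i} (fun _ => y) fun u => J t u k) c →
      ∀ E, e ≤ E → |y - xstar i| ≤ w i * E → |c - xstar k| ≤ w k * E)
    (hA : A ⊆ G.neighborFinset i) (hX : ∀ k ∈ A, |X k - xstar k| ≤ w k * E) (hE : lam * e ≤ E)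
    (hy : IsLocalMin (localObjective G f g i A X fun k => J (t + 1) k i) y) :
    |y - xstar i| ≤ w i * E := by
  have hlam := h.lam_nonneg i
  have hwi := h.w_pos i
  choose! c hc hgap using fun k (hk : k ∈ G.neighborFinset i \ A) =>
    hJ.exists_isLocalMin_sub_le (adj_of_mem_neighborFinset_sdiff hk)
      (h.edge_symm k i (adj_of_mem_neighborFinset_sdiff hk)) t y
  set r := |y - xstar i| / w i
  have hr_mul : |y - xstar i| = w i * r := (mul_div_cancel₀ _ hwi.ne').symm
  set E' := max E (max r e) with hE'
  have hconfig : ∀ k ∈ G.neighborFinset i,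
      |(G.neighborFinset i \ A).piecewise c X k - xstar k| ≤ w k * E' := fun k hk => by
    by_cases hkA : k ∈ A
    · rw [piecewise_eq_of_notMem _ _ _ fun hk' => (mem_sdiff.1 hk').2 hkA]
      exact (hX k hkA).trans (mul_le_mul_of_nonneg_left (le_max_left ..) (h.w_pos k).le)
    · have hk' : k ∈ G.neighborFinset i \ A := mem_sdiff.2 ⟨hk, hkA⟩
      rw [piecewise_eq_of_mem _ _ _ hk']
      refine hstep k hk _ (hc k hk') E' (by simp [hE']) ?_
      rw [hr_mul]
      exact mul_le_mul_of_nonneg_left (by simp [hE']) hwi.le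
  have hnode := h.abs_sub_le_of_deriv_localObjective_eq_zero hxstar subset_rfl (by simp)
    (he.trans (by simp [hE'])) hconfig
    (isLocalMin_localObjective_piecewise hA hy hgap fun k => J t k i).deriv_eq_zero
  have hcontract : r ≤ lam * E' := by
    rw [Finset.sdiff_self, sum_empty, zero_div, add_zero, hr_mul, mul_comm lam, mul_assoc] at hnode
    exact le_of_mul_le_mul_left hnode hwi
  rw [hr_mul]
  exact mul_le_mul_of_nonneg_left (le_of_le_mul_max hlam hlam1 he hE hcontract) hwi.le

theorem abs_sub_le_of_isLocalMin (h : IsDominantProgram G f g M lam w) (hlam1 : lam < 1)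
    (hxstar : ∀ i, pd (objective G f g) i xstar = 0) {J : ℕ → V → V → ℝ → ℝ}
    (hJ : IsMinSum G f g J) (hJ0 : ∀ i j, G.Adj i j → IsInitialMessage (g i j) (J 0 i j)) {C : ℝ}
    (hC : ∀ i, ∑ k ∈ G.neighborFinset i,
      |deriv (J 0 k i) (xstar i) - deriv (g k i (xstar k)) (xstar i)| ≤
        M * w i * ((1 - lam) * C))
    (t : ℕ) (hA : A ⊆ G.neighborFinset i) (hX : ∀ k ∈ A, |X k - xstar k| ≤ w k * E)
    (hE : lam ^ t * C ≤ E) (hy : IsLocalMin (localObjective G f g i A X fun k => J t k i) y) :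
    |y - xstar i| ≤ w i * E := by
  have hlam := h.lam_nonneg i
  have hC0 : 0 ≤ C := by
    refine nonneg_of_mul_nonneg_right ?_ (mul_pos (mul_pos h.M_pos (h.w_pos i)) (sub_pos.2 hlam1))
    rw [mul_assoc]
    exact (sum_nonneg fun k _ => abs_nonneg _).trans (hC i)
  induction t generalizing i A X y E with
  | zero =>
    rw [pow_zero, one_mul] at hE
    refine h.abs_sub_le_of_isLocalMin_zero hlam1 (hxstar i)
      (fun k hk => hJ0 k i ((G.mem_neighborFinset _ _).1 hk).symm) ((hC i).trans ?_) hA hX hy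
    have := h.M_pos
    have := h.w_pos i
    have := sub_pos.2 hlam1
    gcongr
  | succ t ih =>
    refine h.abs_sub_le_of_isLocalMin_succ hlam1 (hxstar i) hJ (e := lam ^ t * C) (by positivity)
      (fun k hk c hc E' hE' hyE' => ih ?_ ?_ hE' hc) hA hX
      (by rwa [← mul_assoc, ← pow_succ']) hy
    · rwa [singleton_subset_iff, G.mem_neighborFinset, G.adj_comm, ← G.mem_neighborFinset]
    · simpa only [forall_eq, mem_singleton] using hyE'

end IsDominantProgram

section Convergence

variable {V : Type*} [Fintype V] [DecidableEq V] [Nonempty V] {G : SimpleGraph V}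
  [DecidableRel G.Adj] {f : V → ℝ → ℝ} {g : V → V → ℝ → ℝ → ℝ} {M lam : ℝ} {w xstar : V → ℝ}
  {J : ℕ → V → V → ℝ → ℝ} {xEst : ℕ → V → ℝ}

theorem IsDominantProgram.abs_estimate_sub_le (h : IsDominantProgram G f g M lam w)
    (hlam1 : lam < 1) (hxstar : ∀ i, pd (objective G f g) i xstar = 0) (hJ : IsMinSum G f g J)
    (hJ0 : ∀ i j, G.Adj i j → IsInitialMessage (g i j) (J 0 i j)) {t : ℕ} {r : V}
    (hxEst : IsLocalMin (fun y => f r y + ∑ u ∈ G.neighborFinset r, J t u r y) (xEst t r)) :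
    |xEst t r - xstar r| ≤
      ((1 / M) * (univ.sup' univ_nonempty w / univ.inf' univ_nonempty w)) *
        (lam ^ t / (1 - lam)) *
        ∑ u, ∑ v ∈ G.neighborFinset u,
          |deriv (J 0 u v) (xstar v) - deriv (g u v (xstar u)) (xstar v)| := by
  set S := ∑ u, ∑ v ∈ G.neighborFinset u,
    |deriv (J 0 u v) (xstar v) - deriv (g u v (xstar u)) (xstar v)|
  set W := univ.inf' univ_nonempty w
  have hM : 0 < M := h.M_pos
  have hlam : 0 ≤ lam := h.lam_nonneg r
  have h1lam : 0 < 1 - lam := sub_pos.2 hlam1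
  have hW : 0 < W := (lt_inf'_iff _).2 fun i _ => h.w_pos i
  have : 0 ≤ S := sum_nonneg fun u _ => sum_nonneg fun v _ => abs_nonneg _
  have hinit : ∀ i, ∑ k ∈ G.neighborFinset i,
      |deriv (J 0 k i) (xstar i) - deriv (g k i (xstar k)) (xstar i)| ≤
        M * w i * ((1 - lam) * (S / (M * W * (1 - lam)))) := fun i =>
    calc _ ≤ S := sum_neighborFinset_le_sum_sum (a := fun u v =>
          |deriv (J 0 u v) (xstar v) - deriv (g u v (xstar u)) (xstar v)|)
          (fun _ _ => abs_nonneg _) i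
      _ = M * W * ((1 - lam) * (S / (M * W * (1 - lam)))) := by field_simp
      _ ≤ M * w i * ((1 - lam) * (S / (M * W * (1 - lam)))) := by
          gcongr
          exact inf'_le w (mem_univ i)
  calc |xEst t r - xstar r| ≤ w r * (lam ^ t * (S / (M * W * (1 - lam)))) := by
        refine h.abs_sub_le_of_isLocalMin hlam1 hxstar hJ hJ0 hinit t (empty_subset _)
          (X := xstar) (by simp) le_rfl ?_
        rwa [funext (localObjective_empty xstar _)]
    _ ≤ univ.sup' univ_nonempty w * (lam ^ t * (S / (M * W * (1 - lam)))) := by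
        gcongr
        exact le_sup' w (mem_univ r)
    _ = _ := by field_simp

theorem minSum_pairwise_convergence_general (h : IsDominantProgram G f g M lam w)
    (hlam1 : lam < 1) (hxstar : ∀ i, pd (objective G f g) i xstar = 0) (hJ : IsMinSum G f g J)
    (hJ0 : ∀ i j, G.Adj i j → IsInitialMessage (g i j) (J 0 i j))
    (hxEst : ∀ t i, IsLocalMin (fun y => f i y + ∑ u ∈ G.neighborFinset i, J t u i y) (xEst t i)) :
    (∀ (t : ℕ) (r : V),
      |xEst t r - xstar r| ≤
        ((1 / M) * (univ.sup' univ_nonempty w / univ.inf' univ_nonempty w)) *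
          (lam ^ t / (1 - lam)) *
          ∑ u, ∑ v ∈ G.neighborFinset u,
            |deriv (J 0 u v) (xstar v) - deriv (g u v (xstar u)) (xstar v)|) ∧
    ∀ r, Tendsto (fun t => xEst t r) atTop (nhds (xstar r)) := by
  have hbound := fun t r => h.abs_estimate_sub_le hlam1 hxstar hJ hJ0 (hxEst t r)
  refine ⟨hbound, fun r => ?_⟩
  have hpow := tendsto_pow_atTop_nhds_zero_of_lt_one (h.lam_nonneg r) hlam1
  refine tendsto_iff_dist_tendsto_zero.2 (squeeze_zero (fun _ => dist_nonneg)
    (fun t => hbound t r) ?_)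
  simpa only [zero_div, mul_zero, zero_mul] using
    ((hpow.div_const (1 - lam)).const_mul _).mul_const _

end Convergence

/-- **Convergence of the min-sum algorithm for pairwise separable convex programs**
(Theorem 1 of Moallemi–Van Roy).  For a pairwise separable convex program whose
objective `F` is `(λ, w)`-scaled diagonally dominant, the min-sum estimates satisfy
`‖x⁽ᵗ⁾ - x*‖_∞ ≤ K (λᵗ/(1-λ)) Σ_{(u,v) ∈ E⃗} |(J⁰_{u→v})'(x*_v) - ∂f_{uv}/∂x_v(x*_u, x*_v)|`,
and in particular converge to the unique optimum `x*`. -/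
theorem minSum_pairwise_convergence
    {V : Type*} [Fintype V] [DecidableEq V] [Nonempty V]
    (G : SimpleGraph V) [DecidableRel G.Adj]
    -- the factors of the pairwise separable convex program
    (f : V → ℝ → ℝ) (g : V → V → ℝ → ℝ → ℝ)
    (hf_sconv : ∀ i, StrictConvexOn ℝ Set.univ (f i))
    (hf_coer : ∀ i, Tendsto (f i) (cocompact ℝ) atTop)
    (hf_smooth : ∀ i, ContDiff ℝ 2 (f i))
    (hg_conv : ∀ i j, G.Adj i j → ConvexOn ℝ Set.univ (fun q : ℝ × ℝ => g i j q.1 q.2))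
    (hg_smooth : ∀ i j, G.Adj i j → ContDiff ℝ 2 (fun q : ℝ × ℝ => g i j q.1 q.2))
    (hg_symm : ∀ i j, G.Adj i j → ∀ a b : ℝ, g i j a b = g j i b a)
    -- the objective function
    (F : (V → ℝ) → ℝ)
    (hF : F = fun x => (∑ i, f i (x i)) +
      (1 / 2) * ∑ i, ∑ j ∈ G.neighborFinset i, g i j (x i) (x j))
    -- `M = min_i inf_x ∂²F/∂x_i²(x) > 0`
    (M : ℝ) (hM : 0 < M) (hMle : ∀ (i : V) (x : V → ℝ), M ≤ pd2 F i i x)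
    -- the unique optimal solution
    (xstar : V → ℝ) (hxstar : ∀ y, y ≠ xstar → F xstar < F y)
    -- scaled diagonal dominance
    (lam : ℝ) (w : V → ℝ) (hlam0 : 0 < lam) (hlam1 : lam < 1) (hw : ∀ i, 0 < w i)
    (hdd : ∀ (i : V) (x : V → ℝ),
      ∑ j ∈ univ.erase i, w j * |pd2 F i j x| ≤ lam * w i * pd2 F i i x)
    -- the min-sum messages and their update rule (minima are attained)
    (J : ℕ → V → V → ℝ → ℝ)
    (hJrec : ∀ (t : ℕ) (i j : V), G.Adj i j → ∀ xj : ℝ,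
      IsLeast (Set.range fun y : ℝ =>
          f i y + g i j y xj + ∑ u ∈ (G.neighborFinset i).erase j, J t u i y)
        (J (t + 1) i j xj))
    -- initialization assumption
    (hJ0smooth : ∀ i j, G.Adj i j → ContDiff ℝ 2 (J 0 i j))
    (hJ0conv : ∀ i j, G.Adj i j → ∃ z : ℝ, ∀ xj : ℝ,
      deriv (deriv (fun b => g i j z b)) xj ≤ deriv (deriv (J 0 i j)) xj)
    -- the estimates: unique minimizers of the local objectives `b⁽ᵗ⁾_i`
    (xEst : ℕ → V → ℝ)
    (hxEst : ∀ (t : ℕ) (i : V) (y : ℝ), y ≠ xEst t i →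
      f i (xEst t i) + ∑ u ∈ G.neighborFinset i, J t u i (xEst t i) <
        f i y + ∑ u ∈ G.neighborFinset i, J t u i y) :
    (∀ (t : ℕ) (r : V),
      |xEst t r - xstar r| ≤
        ((1 / M) * (univ.sup' univ_nonempty w / univ.inf' univ_nonempty w)) *
          (lam ^ t / (1 - lam)) *
          ∑ u, ∑ v ∈ G.neighborFinset u,
            |deriv (J 0 u v) (xstar v) - deriv (fun b => g u v (xstar u) b) (xstar v)|) ∧
    ∀ r, Tendsto (fun t => xEst t r) atTop (nhds (xstar r)) := by
  subst hF
  exact minSum_pairwise_convergence_general (f := f) (g := g)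
    ⟨⟨hf_smooth, hg_smooth, hg_symm⟩, hM, hw, hMle, hdd⟩ hlam1
    (pd_eq_zero_of_isLocalMin (isLocalMin_of_forall_ne_lt hxstar)) hJrec
    (fun i j hij => ⟨hJ0smooth i j hij, hJ0conv i j hij⟩)
    fun t i => isLocalMin_of_forall_ne_lt (hxEst t i)
end

section
/- Consider a pairwise separable convex program with the perturbed min-sum algorithm, with initial messages satisfying the initialization assumption. Define p* ∈ ℝ^{E⃗} by p*_{i→j} = ∂f_{ij}/∂x_j(x*_i, x*_j) − (J^{(0)}_{i→j})'(x*_j). Then for every t ≥ 0 and every (i,j) ∈ E⃗, the message J^{(t)}_{i→j}(·, p*) is differentiable at x*_j with (d/dx_j) J^{(t)}_{i→j}(x*_j, p*) = ∂f_{ij}/∂x_j(x*_i, x*_j), and x^{(t)}_j(p*) = x*_j for every j ∈ V. -/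
open Filter Finset

/-- The directed edges `E⃗` of a simple graph. -/
abbrev EdgeDir {V : Type*} (G : SimpleGraph V) : Type _ := {e : V × V // G.Adj e.1 e.2}

/-!
Call a family of messages exact at `x` if each message from `i` to `j` is convex and has the same
derivative at `x_j` as the interaction `f_{ij}(x_i, ·)`. The perturbation `p*` is chosen so that the
initial messages are exact at the minimizer `x*`. Exactness is preserved by a min-sum step: the
first-order conditions for `x*` say that the inner problem defining the new message at `x*_j` is
solved by `y = x*_i`, so the new message, which is convex, lies below the shifted interaction
`f_{ij}(x*_i, ·) + const` and touches it at `x*_j`; a convex function squeezed from above in this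
way inherits the derivative. The same first-order conditions show that `x*_j` minimizes the local
objective of `j` for any exact messages.
-/

open scoped Topology

theorem convexOn_sum {𝕜 E β ι : Type*} [Semiring 𝕜] [PartialOrder 𝕜] [AddCommMonoid E]
    [AddCommMonoid β] [PartialOrder β] [IsOrderedAddMonoid β] [SMul 𝕜 E] [Module 𝕜 β]
    {S : Set E} (hS : Convex 𝕜 S) (s : Finset ι) {φ : ι → E → β}
    (hφ : ∀ i ∈ s, ConvexOn 𝕜 S (φ i)) : ConvexOn 𝕜 S fun y => ∑ i ∈ s, φ i y := by
  classical
  induction s using Finset.induction_on with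
  | empty => simpa using convexOn_const (0 : β) hS
  | insert i s hi ih =>
    simp only [sum_insert hi]
    exact (hφ i (mem_insert_self i s)).add (ih fun k hk => hφ k (mem_insert_of_mem hk))

theorem convexOn_of_isGLB_range {E F : Type*} [AddCommMonoid E] [AddCommMonoid F]
    [Module ℝ E] [Module ℝ F] {h : E → F → ℝ} {φ : F → ℝ}
    (hh : ConvexOn ℝ Set.univ fun q : E × F => h q.1 q.2)
    (hφ : ∀ x, IsGLB (Set.range fun y => h y x) (φ x)) : ConvexOn ℝ Set.univ φ := by
  refine ⟨convex_univ, fun x₁ _ x₂ _ s t hs ht hst => le_of_forall_pos_le_add fun ε hε => ?_⟩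
  obtain ⟨_, ⟨y₁, rfl⟩, -, hy₁⟩ := (hφ x₁).exists_between (lt_add_of_pos_right _ hε)
  obtain ⟨_, ⟨y₂, rfl⟩, -, hy₂⟩ := (hφ x₂).exists_between (lt_add_of_pos_right _ hε)
  calc φ (s • x₁ + t • x₂)
      ≤ h (s • y₁ + t • y₂) (s • x₁ + t • x₂) := (hφ _).1 (Set.mem_range_self _)
    _ ≤ s • h y₁ x₁ + t • h y₂ x₂ :=
      hh.2 (Set.mem_univ (y₁, x₁)) (Set.mem_univ (y₂, x₂)) hs ht hst
    _ ≤ s • (φ x₁ + ε) + t • (φ x₂ + ε) := by gcongr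
    _ = s • φ x₁ + t • φ x₂ + (s + t) * ε := by simp only [smul_eq_mul]; ring
    _ = s • φ x₁ + t • φ x₂ + ε := by rw [hst, one_mul]

theorem convexOn_right_of_convexOn_prod {E F : Type*} [AddCommGroup E] [AddCommGroup F]
    [Module ℝ E] [Module ℝ F] {h : E → F → ℝ}
    (hh : ConvexOn ℝ Set.univ fun q : E × F => h q.1 q.2) (y : E) :
    ConvexOn ℝ Set.univ (h y) :=
  hh.comp_affineMap ((AffineMap.const ℝ F y).prod (AffineMap.id ℝ F))

section Normed

variable {E : Type*} [NormedAddCommGroup E] [NormedSpace ℝ E]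

theorem isMinOn_of_convexOn_of_hasFDerivAt_zero {S : Set E} {φ : E → ℝ} {a : E}
    (hφ : ConvexOn ℝ S φ) (ha : a ∈ S) (hd : HasFDerivAt φ (0 : E →L[ℝ] ℝ) a) :
    IsMinOn φ S a := by
  intro x hx
  have hd_line : HasDerivAt (φ ∘ AffineMap.lineMap a x) 0 (0 : ℝ) := by
    have hd₀ : HasFDerivAt φ (0 : E →L[ℝ] ℝ) (AffineMap.lineMap a x (0 : ℝ)) := by simpa using hd
    simpa using hd₀.comp_hasDerivAt (0 : ℝ) AffineMap.hasDerivAt_lineMap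
  have hslope : 0 ≤ slope (φ ∘ AffineMap.lineMap a x) (0 : ℝ) 1 :=
    (hφ.comp_affineMap (AffineMap.lineMap a x)).le_slope_of_hasDerivAt
      (by simpa) (by simpa) one_pos hd_line
  simpa [slope_def_field] using hslope

-- By convexity `φ (a + h) - φ a - φ' h` lies between `-r (-h)` and `r h`, where `r` is the
-- first-order remainder of `ψ` at `a`.
theorem hasFDerivAt_of_convexOn_of_le {S : Set E} {φ ψ : E → ℝ} {φ' : E →L[ℝ] ℝ} {a : E}
    (hφ : ConvexOn ℝ S φ) (hS : S ∈ 𝓝 a) (hle : φ ≤ᶠ[𝓝 a] ψ) (heq : φ a = ψ a)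
    (hψ : HasFDerivAt ψ φ' a) : HasFDerivAt φ φ' a := by
  rw [hasFDerivAt_iff_isLittleO_nhds_zero] at hψ ⊢
  have hneg : Tendsto (fun h : E => -h) (𝓝 0) (𝓝 0) := by simpa using tendsto_neg (0 : E)
  have hadd : Tendsto (fun h : E => a + h) (𝓝 0) (𝓝 a) := by
    simpa using tendsto_const_nhds.add (tendsto_id (α := E) (x := 𝓝 0))
  have hψ_neg := (hψ.comp_tendsto hneg).trans_isBigO (Asymptotics.isBigO_refl _ _).neg_left
  refine (Asymptotics.IsBigO.of_norm_eventuallyLE ?_).trans_isLittleO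
    (hψ.norm_left.add hψ_neg.norm_left)
  have hsegment := hadd.eventually (hle.and hS)
  filter_upwards [hsegment, hneg.eventually hsegment] with h ⟨hle₁, hS₁⟩ ⟨hle₂, hS₂⟩
  have hmid : φ a ≤ (1 / 2 : ℝ) • φ (a + h) + (1 / 2 : ℝ) • φ (a + -h) := by
    have hmidpoint : a = (1 / 2 : ℝ) • (a + h) + (1 / 2 : ℝ) • (a + -h) := by module
    conv_lhs => rw [hmidpoint]
    exact hφ.2 hS₁ hS₂ one_half_pos.le one_half_pos.le (add_halves 1)
  simp only [smul_eq_mul, Function.comp_apply, map_neg, Real.norm_eq_abs] at hmid ⊢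
  set r := ψ (a + h) - ψ a - φ' h
  set r' := ψ (a + -h) - ψ a - -φ' h
  rw [abs_le]
  constructor <;> linarith [le_abs_self r, le_abs_self r', abs_nonneg r, abs_nonneg r']

end Normed

theorem convexOn_of_convexOn_of_deriv2_le {h k : ℝ → ℝ} (hh : ConvexOn ℝ Set.univ h)
    (hh' : Differentiable ℝ h) (hk' : Differentiable ℝ k) (hk'' : Differentiable ℝ (deriv k))
    (hle : ∀ x, deriv (deriv h) x ≤ deriv (deriv k) x) : ConvexOn ℝ Set.univ k := by
  have hmono : Monotone (deriv h) := monotoneOn_univ.1 (hh.monotoneOn_deriv fun x _ => hh' x)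
  exact convexOn_univ_of_deriv2_nonneg hk' hk'' fun x => hmono.deriv_nonneg.trans (hle x)

theorem sum_sum_neighborFinset_eq_two_nsmul {V M : Type*} [Fintype V] [AddCommMonoid M]
    (G : SimpleGraph V) [G.LocallyFinite] {D : V → V → M} (i : V)
    (hsymm : ∀ k j, G.Adj k j → D k j = D j k)
    (hzero : ∀ k j, G.Adj k j → k ≠ i → j ≠ i → D k j = 0) :
    ∑ k, ∑ j ∈ G.neighborFinset k, D k j = 2 • ∑ u ∈ G.neighborFinset i, D u i := by
  classical
  have hrow : ∑ j ∈ G.neighborFinset i, D i j = ∑ u ∈ G.neighborFinset i, D u i :=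
    sum_congr rfl fun u hu => hsymm i u ((G.mem_neighborFinset i u).1 hu)
  have hcolumn : ∑ u ∈ G.neighborFinset i, D u i
      = ∑ k ∈ univ.erase i, ∑ j ∈ G.neighborFinset k, D k j := by
    refine sum_subset_zero_on_sdiff (fun k hk => ?_) (fun k hk => ?_) fun k hk => ?_
    · exact mem_erase.2 ⟨((G.mem_neighborFinset i k).1 hk).ne', mem_univ k⟩
    · obtain ⟨hki, hik⟩ := mem_sdiff.1 hk
      refine sum_eq_zero fun j hj => ?_
      have hkj := (G.mem_neighborFinset k j).1 hj
      exact hzero k j hkj (ne_of_mem_erase hki) fun hji =>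
        hik ((G.mem_neighborFinset i k).2 (hji ▸ hkj.symm))
    · have hik := (G.mem_neighborFinset i k).1 hk
      symm
      exact sum_eq_single_of_mem i ((G.mem_neighborFinset k i).2 hik.symm) fun j hj hji =>
        hzero k j ((G.mem_neighborFinset k j).1 hj) hik.ne' hji
  rw [← add_sum_erase _ _ (mem_univ i), hrow, ← hcolumn, two_nsmul]

namespace MinSum

section Program

variable {V : Type*} {E : V → Type*} (G : SimpleGraph V) (f : ∀ i, E i → ℝ)
  (g : ∀ i j, E i → E j → ℝ)

/-- The objective `∑ᵢ f_i(x_i) + ∑_{i,j} f_{ij}(x_i, x_j)`; the factor `1 / 2` turns the sum over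
directed edges into one over undirected edges. -/
noncomputable def objective [Fintype V] [G.LocallyFinite] (x : ∀ i, E i) : ℝ :=
  (∑ i, f i (x i)) + (1 / 2) * ∑ i, ∑ j ∈ G.neighborFinset i, g i j (x i) (x j)

/-- The local objective `b_i` of vertex `i` under the messages `J`, where `J u i` is the message
sent from `u` to `i`. -/
def localObjective [G.LocallyFinite] (J : V → ∀ j, E j → ℝ) (i : V) (y : E i) : ℝ :=
  f i y + ∑ u ∈ G.neighborFinset i, J u i y

/-- The function of `y = x_i` whose infimum is the next message from `i` to `j` at `x = x_j`. -/
def edgeObjective [DecidableEq V] [G.LocallyFinite] (J : V → ∀ j, E j → ℝ) (i j : V) (y : E i)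
    (x : E j) : ℝ :=
  f i y + g i j y x + ∑ u ∈ (G.neighborFinset i).erase j, J u i y

/-- One step of the min-sum algorithm takes the messages `J` to `J'`. Only infima are required, so
the minima over `y` need not be attained. -/
def IsMinSumStep [DecidableEq V] [G.LocallyFinite] (J J' : V → ∀ j, E j → ℝ) : Prop :=
  ∀ i j, G.Adj i j → ∀ x, IsGLB (Set.range fun y => edgeObjective G f g J i j y x) (J' i j x)

variable {G f g}

theorem objective_update_sub [Fintype V] [DecidableEq V] [G.LocallyFinite]
    (hg_symm : ∀ i j, G.Adj i j → ∀ a b, g i j a b = g j i b a) (x : ∀ i, E i) (i : V) (y : E i) :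
    objective G f g (Function.update x i y) - objective G f g x =
      localObjective G f (fun u i => g u i (x u)) i y
        - localObjective G f (fun u i => g u i (x u)) i (x i) := by
  set x' := Function.update x i y
  have hx'_self : x' i = y := Function.update_self i y x
  have hx'_of_ne : ∀ k, k ≠ i → x' k = x k := fun k hk => Function.update_of_ne hk y x
  have hvertex : ∑ k, (f k (x' k) - f k (x k)) = f i y - f i (x i) := by
    rw [sum_eq_single_of_mem i (mem_univ i) fun k _ hk => by rw [hx'_of_ne k hk, sub_self],
      hx'_self]
  have hedge : ∑ k, ∑ j ∈ G.neighborFinset k, (g k j (x' k) (x' j) - g k j (x k) (x j))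
      = 2 • ∑ u ∈ G.neighborFinset i, (g u i (x' u) (x' i) - g u i (x u) (x i)) :=
    sum_sum_neighborFinset_eq_two_nsmul G i
      (fun k j h => by rw [hg_symm k j h, hg_symm k j h])
      (fun k j _ hk hj => by rw [hx'_of_ne k hk, hx'_of_ne j hj, sub_self])
  have hneighbor : ∑ u ∈ G.neighborFinset i, (g u i (x' u) (x' i) - g u i (x u) (x i))
      = ∑ u ∈ G.neighborFinset i, (g u i (x u) y - g u i (x u) (x i)) :=
    sum_congr rfl fun u hu => by
      rw [hx'_of_ne u ((G.mem_neighborFinset i u).1 hu).ne', hx'_self]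
  rw [hneighbor] at hedge
  simp only [sum_sub_distrib, nsmul_eq_mul, Nat.cast_ofNat] at hvertex hedge
  simp only [objective, localObjective]
  linarith

end Program

section Exactness

variable {V : Type*} {E : V → Type*} [∀ i, NormedAddCommGroup (E i)] [∀ i, NormedSpace ℝ (E i)]
  (G : SimpleGraph V) (f : ∀ i, E i → ℝ) (g : ∀ i j, E i → E j → ℝ)

/-- The first-order optimality condition for the objective at `x`, one coordinate at a time. -/
def IsStationary [G.LocallyFinite] (x : ∀ i, E i) : Prop :=
  ∀ i, fderiv ℝ (f i) (x i) + ∑ u ∈ G.neighborFinset i, fderiv ℝ (g u i (x u)) (x i) = 0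

/-- The perturbation `p*` of the initial messages `J₀`, as a linear functional of `x_j` on each
directed edge: it corrects the derivative of `J₀` at `x_j` to that of `f_{ij}(x_i, ·)`. -/
noncomputable def exactPerturbation (J₀ : V → ∀ j, E j → ℝ) (x : ∀ i, E i) (i j : V) :
    E j →L[ℝ] ℝ :=
  fderiv ℝ (g i j (x i)) (x j) - fderiv ℝ (J₀ i j) (x j)

/-- The messages `J` are convex and, to first order at `x`, the message from `i` to `j` agrees with
the true interaction `f_{ij}(x_i, ·)`. This is the invariant of the min-sum algorithm. -/
structure IsExactAt (x : ∀ i, E i) (J : V → ∀ j, E j → ℝ) : Prop where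
  convexOn : ∀ i j, G.Adj i j → ConvexOn ℝ Set.univ (J i j)
  hasFDerivAt : ∀ i j, G.Adj i j → HasFDerivAt (J i j) (fderiv ℝ (g i j (x i)) (x j)) (x j)

variable {G f g} {x : ∀ i, E i}

theorem isExactAt_of_eq_add_exactPerturbation {J₀ J : V → ∀ j, E j → ℝ}
    (hJ₀_conv : ∀ i j, G.Adj i j → ConvexOn ℝ Set.univ (J₀ i j))
    (hJ₀_diff : ∀ i j, G.Adj i j → DifferentiableAt ℝ (J₀ i j) (x j))
    (hJ : ∀ i j, G.Adj i j → ∀ y, J i j y = J₀ i j y + exactPerturbation g J₀ x i j y) :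
    IsExactAt G g x J where
  convexOn i j hij := by
    rw [funext (hJ i j hij)]
    exact (hJ₀_conv i j hij).add
      (LinearMap.convexOn (ContinuousLinearMap.toLinearMap _) convex_univ)
  hasFDerivAt i j hij := by
    have hd := (hJ₀_diff i j hij).hasFDerivAt.add (exactPerturbation g J₀ x i j).hasFDerivAt
    rw [exactPerturbation, add_sub_cancel] at hd
    exact hd.congr_of_eventuallyEq (Eventually.of_forall (hJ i j hij))

theorem isStationary_of_isMinOn [Fintype V] [G.LocallyFinite]
    (hf_diff : ∀ i, DifferentiableAt ℝ (f i) (x i))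
    (hg_diff : ∀ i j, G.Adj i j → DifferentiableAt ℝ (g i j (x i)) (x j))
    (hg_symm : ∀ i j, G.Adj i j → ∀ a b, g i j a b = g j i b a)
    (hx : IsMinOn (objective G f g) Set.univ x) : IsStationary G f g x := by
  classical
  intro i
  have hmin : IsLocalMin (localObjective G f (fun u i => g u i (x u)) i) (x i) :=
    Eventually.of_forall fun y => by
      have hle : objective G f g x ≤ objective G f g (Function.update x i y) :=
        hx (Set.mem_univ _)
      linarith [objective_update_sub (f := f) hg_symm x i y]
  exact hmin.hasFDerivAt_eq_zero <| (hf_diff i).hasFDerivAt.add <| HasFDerivAt.fun_sum fun u hu =>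
    (hg_diff u i ((G.mem_neighborFinset i u).1 hu).symm).hasFDerivAt

theorem IsStationary.isMinOn_add_sum [G.LocallyFinite] (hx : IsStationary G f g x) {i : V}
    (hf_conv : ConvexOn ℝ Set.univ (f i)) (hf_diff : DifferentiableAt ℝ (f i) (x i))
    {φ : V → E i → ℝ} (hφ_conv : ∀ u, G.Adj u i → ConvexOn ℝ Set.univ (φ u))
    (hφ : ∀ u, G.Adj u i → HasFDerivAt (φ u) (fderiv ℝ (g u i (x u)) (x i)) (x i)) :
    IsMinOn (fun y => f i y + ∑ u ∈ G.neighborFinset i, φ u y) Set.univ (x i) := by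
  have hadj : ∀ u ∈ G.neighborFinset i, G.Adj u i := fun u hu =>
    ((G.mem_neighborFinset i u).1 hu).symm
  refine isMinOn_of_convexOn_of_hasFDerivAt_zero
    (hf_conv.add <| convexOn_sum convex_univ _ fun u hu => hφ_conv u (hadj u hu))
    (Set.mem_univ _) ?_
  rw [← hx i]
  exact hf_diff.hasFDerivAt.add <| HasFDerivAt.fun_sum fun u hu => hφ u (hadj u hu)

section Step

variable [DecidableEq V] [G.LocallyFinite] {J J' : V → ∀ j, E j → ℝ}

-- In place of the message from `j` to `i`, the vertex `i` sees the interaction `f_{ij}(·, x_j)`,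
-- which has the same first-order behaviour.
theorem IsExactAt.isMinOn_edgeObjective (hJ : IsExactAt G g x J) (hx : IsStationary G f g x)
    {i j : V} (hij : G.Adj i j)
    (hf_conv : ConvexOn ℝ Set.univ (f i)) (hf_diff : DifferentiableAt ℝ (f i) (x i))
    (hg_conv : ConvexOn ℝ Set.univ (g j i (x j)))
    (hg_diff : DifferentiableAt ℝ (g j i (x j)) (x i))
    (hg_symm : ∀ a b, g i j a b = g j i b a) :
    IsMinOn (fun y => edgeObjective G f g J i j y (x j)) Set.univ (x i) := by
  let φ : V → E i → ℝ := Function.update (fun u => J u i) j (g j i (x j))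
  have hedge : (fun y => edgeObjective G f g J i j y (x j))
      = fun y => f i y + ∑ u ∈ G.neighborFinset i, φ u y := by
    ext y
    have hsum : ∑ u ∈ (G.neighborFinset i).erase j, φ u y
        = ∑ u ∈ (G.neighborFinset i).erase j, J u i y :=
      sum_congr rfl fun u hu => by simp only [φ, Function.update_of_ne (ne_of_mem_erase hu)]
    rw [← add_sum_erase _ _ ((G.mem_neighborFinset i j).2 hij), hsum, ← add_assoc]
    simp only [edgeObjective, φ, Function.update_self, hg_symm]
  rw [hedge]
  refine hx.isMinOn_add_sum hf_conv hf_diff ?_ ?_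
  · exact (Function.forall_update_iff _ fun u ψ => G.Adj u i → ConvexOn ℝ Set.univ ψ).2
      ⟨fun _ => hg_conv, fun u _ => hJ.convexOn u i⟩
  · exact (Function.forall_update_iff _ fun u ψ => G.Adj u i →
      HasFDerivAt ψ (fderiv ℝ (g u i (x u)) (x i)) (x i)).2
      ⟨fun _ => hg_diff.hasFDerivAt, fun u _ => hJ.hasFDerivAt u i⟩

theorem convexOn_edgeObjective {i j : V} (hf_conv : ConvexOn ℝ Set.univ (f i))
    (hg_conv : ConvexOn ℝ Set.univ fun q : E i × E j => g i j q.1 q.2)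
    (hJ_conv : ∀ u, G.Adj u i → ConvexOn ℝ Set.univ (J u i)) :
    ConvexOn ℝ Set.univ fun q : E i × E j => edgeObjective G f g J i j q.1 q.2 := by
  have hfst {φ : E i → ℝ} (hφ : ConvexOn ℝ Set.univ φ) :
      ConvexOn ℝ Set.univ fun q : E i × E j => φ q.1 :=
    hφ.comp_linearMap (LinearMap.fst ℝ (E i) (E j))
  exact ((hfst hf_conv).add hg_conv).add <| convexOn_sum convex_univ _ fun u hu =>
    hfst (hJ_conv u ((G.mem_neighborFinset i u).1 (mem_of_mem_erase hu)).symm)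

theorem IsExactAt.minSumStep (hJ : IsExactAt G g x J) (hstep : IsMinSumStep G f g J J')
    (hx : IsStationary G f g x)
    (hf_conv : ∀ i, ConvexOn ℝ Set.univ (f i)) (hf_diff : ∀ i, DifferentiableAt ℝ (f i) (x i))
    (hg_conv : ∀ i j, G.Adj i j → ConvexOn ℝ Set.univ fun q : E i × E j => g i j q.1 q.2)
    (hg_diff : ∀ i j, G.Adj i j → DifferentiableAt ℝ (g i j (x i)) (x j))
    (hg_symm : ∀ i j, G.Adj i j → ∀ a b, g i j a b = g j i b a) :
    IsExactAt G g x J' := by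
  have hconv : ∀ i j, G.Adj i j → ConvexOn ℝ Set.univ (J' i j) := fun i j hij =>
    convexOn_of_isGLB_range
      (convexOn_edgeObjective (hf_conv i) (hg_conv i j hij) fun u hu => hJ.convexOn u i hu)
      (hstep i j hij)
  refine ⟨hconv, fun i j hij => ?_⟩
  have hle : ∀ z, J' i j z ≤ edgeObjective G f g J i j (x i) z := fun z =>
    (hstep i j hij z).1 (Set.mem_range_self _)
  have hmin := hJ.isMinOn_edgeObjective hx hij (hf_conv i) (hf_diff i)
    (convexOn_right_of_convexOn_prod (hg_conv j i hij.symm) (x j)) (hg_diff j i hij.symm)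
    (hg_symm i j hij)
  have heq : J' i j (x j) = edgeObjective G f g J i j (x i) (x j) :=
    (hle (x j)).antisymm <| (hstep i j hij (x j)).2 <| Set.forall_mem_range.2 fun y =>
      hmin (Set.mem_univ y)
  exact hasFDerivAt_of_convexOn_of_le (hconv i j hij) univ_mem (Eventually.of_forall hle) heq
    (((hg_diff i j hij).hasFDerivAt.const_add (f i (x i))).add_const _)

end Step

end Exactness

theorem exactPerturbation_apply_real {V : Type*} (g : V → V → ℝ → ℝ → ℝ) (J₀ : V → V → ℝ → ℝ)
    (x : V → ℝ) (i j : V) (y : ℝ) :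
    exactPerturbation (E := fun _ => ℝ) g J₀ x i j y
      = (deriv (g i j (x i)) (x j) - deriv (J₀ i j) (x j)) * y := by
  simp only [exactPerturbation, sub_apply, fderiv_eq_smul_deriv, smul_eq_mul]
  ring

end MinSum

open MinSum

theorem minSum_perturbed_pstar_exact_general {V : Type*} [Fintype V] [DecidableEq V]
    {E : V → Type*} [∀ i, NormedAddCommGroup (E i)] [∀ i, NormedSpace ℝ (E i)]
    (G : SimpleGraph V) [G.LocallyFinite] (f : ∀ i, E i → ℝ) (g : ∀ i j, E i → E j → ℝ)
    (xstar : ∀ i, E i) (hxstar : IsMinOn (objective G f g) Set.univ xstar)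
    (hf_conv : ∀ i, ConvexOn ℝ Set.univ (f i))
    (hf_diff : ∀ i, DifferentiableAt ℝ (f i) (xstar i))
    (hg_conv : ∀ i j, G.Adj i j → ConvexOn ℝ Set.univ fun q : E i × E j => g i j q.1 q.2)
    (hg_diff : ∀ i j, G.Adj i j → DifferentiableAt ℝ (g i j (xstar i)) (xstar j))
    (hg_symm : ∀ i j, G.Adj i j → ∀ a b, g i j a b = g j i b a)
    (J₀ : V → ∀ j, E j → ℝ) (hJ₀_conv : ∀ i j, G.Adj i j → ConvexOn ℝ Set.univ (J₀ i j))
    (hJ₀_diff : ∀ i j, G.Adj i j → DifferentiableAt ℝ (J₀ i j) (xstar j))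
    (J : ℕ → V → ∀ j, E j → ℝ)
    (hJ_zero : ∀ i j, G.Adj i j → ∀ y, J 0 i j y = J₀ i j y + exactPerturbation g J₀ xstar i j y)
    (hJ_succ : ∀ t, IsMinSumStep G f g (J t) (J (t + 1))) (t : ℕ) :
    IsExactAt G g xstar (J t) ∧
      ∀ i, IsMinOn (localObjective G f (J t) i) Set.univ (xstar i) := by
  have hstat : IsStationary G f g xstar := isStationary_of_isMinOn hf_diff hg_diff hg_symm hxstar
  have hexact : IsExactAt G g xstar (J t) := by
    induction t with
    | zero => exact isExactAt_of_eq_add_exactPerturbation hJ₀_conv hJ₀_diff hJ_zero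
    | succ t ih => exact ih.minSumStep (hJ_succ t) hstat hf_conv hf_diff hg_conv hg_diff hg_symm
  exact ⟨hexact, fun i => hstat.isMinOn_add_sum (hf_conv i) (hf_diff i)
    (fun u => hexact.convexOn u i) fun u => hexact.hasFDerivAt u i⟩

/-- **The perturbation `p*` makes min-sum exact** (Lemma 2 of Moallemi–Van Roy).
With `p*_{i→j} = ∂f_{ij}/∂x_j(x*_i, x*_j) - (J⁰_{i→j})'(x*_j)`, the perturbed messages
satisfy `(d/dx_j) J⁽ᵗ⁾_{i→j}(x*_j, p*) = ∂f_{ij}/∂x_j(x*_i, x*_j)` for all `t`, and the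
perturbed estimates satisfy `x⁽ᵗ⁾_j(p*) = x*_j` for all `t` and `j`. -/
theorem minSum_perturbed_pstar_exact
    {V : Type*} [Fintype V] [DecidableEq V] [Nonempty V]
    (G : SimpleGraph V) [DecidableRel G.Adj]
    -- the factors of the pairwise separable convex program
    (f : V → ℝ → ℝ) (g : V → V → ℝ → ℝ → ℝ)
    (hf_sconv : ∀ i, StrictConvexOn ℝ Set.univ (f i))
    (hf_coer : ∀ i, Tendsto (f i) (cocompact ℝ) atTop)
    (hf_smooth : ∀ i, ContDiff ℝ 2 (f i))
    (hg_conv : ∀ i j, G.Adj i j → ConvexOn ℝ Set.univ (fun q : ℝ × ℝ => g i j q.1 q.2))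
    (hg_smooth : ∀ i j, G.Adj i j → ContDiff ℝ 2 (fun q : ℝ × ℝ => g i j q.1 q.2))
    (hg_symm : ∀ i j, G.Adj i j → ∀ a b : ℝ, g i j a b = g j i b a)
    -- the objective function
    (F : (V → ℝ) → ℝ)
    (hF : F = fun x => (∑ i, f i (x i)) +
      (1 / 2) * ∑ i, ∑ j ∈ G.neighborFinset i, g i j (x i) (x j))
    -- `M = min_i inf_x ∂²F/∂x_i²(x) > 0`
    (M : ℝ) (hM : 0 < M) (hMle : ∀ (i : V) (x : V → ℝ), M ≤ pd2 F i i x)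
    -- the unique optimal solution
    (xstar : V → ℝ) (hxstar : ∀ y, y ≠ xstar → F xstar < F y)
    -- the initial messages and the initialization assumption
    (J0 : V → V → ℝ → ℝ)
    (hJ0smooth : ∀ i j, G.Adj i j → ContDiff ℝ 2 (J0 i j))
    (hJ0conv : ∀ i j, G.Adj i j → ∃ z : ℝ, ∀ xj : ℝ,
      deriv (deriv (fun b => g i j z b)) xj ≤ deriv (deriv (J0 i j)) xj)
    -- the perturbed min-sum messages and their update rule (minima are attained)
    (JP : ℕ → V → V → (EdgeDir G → ℝ) → ℝ → ℝ)
    (hJP0 : ∀ (i j : V) (h : G.Adj i j) (p : EdgeDir G → ℝ) (xj : ℝ),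
      JP 0 i j p xj = J0 i j xj + p ⟨(i, j), h⟩ * xj)
    (hJPrec : ∀ (t : ℕ) (i j : V), G.Adj i j → ∀ (p : EdgeDir G → ℝ) (xj : ℝ),
      IsLeast (Set.range fun y : ℝ =>
          f i y + g i j y xj + ∑ u ∈ (G.neighborFinset i).erase j, JP t u i p y)
        (JP (t + 1) i j p xj))
    -- the perturbed estimates: unique minimizers of the local objectives `b⁽ᵗ⁾_i(·, p)`
    (xEstP : ℕ → V → (EdgeDir G → ℝ) → ℝ)
    (hxEstP : ∀ (t : ℕ) (i : V) (p : EdgeDir G → ℝ) (y : ℝ), y ≠ xEstP t i p →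
      f i (xEstP t i p) + ∑ u ∈ G.neighborFinset i, JP t u i p (xEstP t i p) <
        f i y + ∑ u ∈ G.neighborFinset i, JP t u i p y)
    -- the perturbation `p*`
    (pstar : EdgeDir G → ℝ)
    (hpstar : ∀ (i j : V) (h : G.Adj i j),
      pstar ⟨(i, j), h⟩ =
        deriv (fun b => g i j (xstar i) b) (xstar j) - deriv (J0 i j) (xstar j)) :
    (∀ (t : ℕ) (i j : V), G.Adj i j →
      HasDerivAt (fun xj => JP t i j pstar xj)
        (deriv (fun b => g i j (xstar i) b) (xstar j)) (xstar j)) ∧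
    ∀ (t : ℕ) (j : V), xEstP t j pstar = xstar j := by
  have hmin : IsMinOn (objective (E := fun _ => ℝ) G f g) Set.univ xstar := by
    refine isMinOn_univ_iff.2 fun y => ?_
    obtain rfl | hy := eq_or_ne y xstar
    exacts [le_rfl, by subst hF; exact (hxstar y hy).le]
  have hg_diff : ∀ i j, G.Adj i j → ∀ a, Differentiable ℝ (g i j a) := fun i j h a =>
    ((hg_smooth i j h).comp (contDiff_const.prodMk contDiff_id)).differentiable two_ne_zero
  have hJ0_diff : ∀ i j, G.Adj i j → Differentiable ℝ (J0 i j) := fun i j h =>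
    (hJ0smooth i j h).differentiable two_ne_zero
  have hJ0_conv : ∀ i j, G.Adj i j → ConvexOn ℝ Set.univ (J0 i j) := fun i j h =>
    have ⟨z, hz⟩ := hJ0conv i j h
    convexOn_of_convexOn_of_deriv2_le (convexOn_right_of_convexOn_prod (hg_conv i j h) z)
      (hg_diff i j h z) (hJ0_diff i j h) (hJ0smooth i j h).differentiable_deriv_two hz
  have hexact := minSum_perturbed_pstar_exact_general (E := fun _ => ℝ) G f g xstar hmin
    (fun i => (hf_sconv i).convexOn) (fun i => (hf_smooth i).differentiable two_ne_zero _)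
    hg_conv (fun i j h => hg_diff i j h _ _) hg_symm J0 hJ0_conv (fun i j h => hJ0_diff i j h _)
    (fun t i j => JP t i j pstar)
    (fun i j h y => by rw [exactPerturbation_apply_real, hJP0 i j h, hpstar i j h])
    (fun t i j h y => (hJPrec t i j h pstar y).isGLB)
  refine ⟨fun t i j h => ((hexact t).1.hasFDerivAt i j h).hasDerivAt, fun t j => ?_⟩
  by_contra hne
  exact (hxEstP t j pstar _ (Ne.symm hne)).not_ge ((hexact t).2 j (Set.mem_univ _))
end
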